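/- Let $(l_i)_{i \ge 0}$ be a sequence of positive real numbers, and for each $i \ge 0$ set $d_i = \operatorname{arcosh}\Big(\dfrac{1 + \cosh(l_i/2)\cosh(l_{i+1}/2)}{\sinh(l_i/2)\sinh(l_{i+1}/2)}\Big)$. If the series $\sum_{i=0}^{\infty} d_i$ converges, then $l_i \to \infty$ as $i \to \infty$. -/

import Mathlib

open Real Filter

/-- `arcosh x = log (x + √(x² - 1))`, the inverse of `cosh` on `[1, ∞)`. -/
noncomputable def arcosh (x : ℝ) : ℝ := Real.log (x + Real.sqrt (x ^ 2 - 1))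

/-!
A cusped pair of pants with boundary lengths `a` and `b` satisfies
`cosh (dist) > coth (a / 2) ≥ 1 + exp (-a)`: the first bound discards the summand `1` and uses
`cosh > sinh` at `b / 2`. If the distances tend to zero, then `exp (-a)` is squeezed to zero.
-/

theorem arcosh_eq_real_arcosh (x : ℝ) : _root_.arcosh x = Real.arcosh x :=
  rfl

theorem one_add_exp_neg_two_mul_le_cosh_div_sinh {x : ℝ} (hx : 0 < x) :
    1 + exp (-(2 * x)) ≤ cosh x / sinh x := by
  have sinh_x_pos : 0 < sinh x := sinh_pos_iff.2 hx
  have sinh_x_le_exp : sinh x ≤ exp x := by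
    linarith [cosh_add_sinh x, cosh_pos x]
  calc
    1 + exp (-(2 * x)) = 1 + exp (-x) / exp x := by rw [← exp_sub]; ring_nf
    _ ≤ 1 + exp (-x) / sinh x := by
      linarith [div_le_div_of_nonneg_left (exp_pos (-x)).le sinh_x_pos sinh_x_le_exp]
    _ = cosh x / sinh x := by rw [← cosh_sub_sinh]; field_simp; ring

theorem cosh_div_sinh_lt_one_add_cosh_mul_cosh_div {x y : ℝ} (hx : 0 < x) (hy : 0 < y) :
    cosh x / sinh x < (1 + cosh x * cosh y) / (sinh x * sinh y) := by
  have sinh_x_pos : 0 < sinh x := sinh_pos_iff.2 hx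
  have sinh_y_pos : 0 < sinh y := sinh_pos_iff.2 hy
  have cosh_mul_sinh_lt : cosh x * sinh y < 1 + cosh x * cosh y := by
    linarith [mul_lt_mul_of_pos_left (sinh_lt_cosh y) (cosh_pos x)]
  calc
    cosh x / sinh x = cosh x * sinh y / (sinh x * sinh y) :=
      (mul_div_mul_right _ _ sinh_y_pos.ne').symm
    _ < (1 + cosh x * cosh y) / (sinh x * sinh y) :=
      div_lt_div_of_pos_right cosh_mul_sinh_lt (mul_pos sinh_x_pos sinh_y_pos)

/-- The distance between the two boundary geodesics, of lengths `a` and `b`, of a hyperbolic pair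
of pants whose third end is a cusp. It is meaningful only for positive `a` and `b`. -/
noncomputable def cuspedPantsDist (a b : ℝ) : ℝ :=
  _root_.arcosh ((1 + cosh (a / 2) * cosh (b / 2)) / (sinh (a / 2) * sinh (b / 2)))

theorem one_add_exp_neg_lt_cosh_cuspedPantsDist {a b : ℝ} (ha : 0 < a) (hb : 0 < b) :
    1 + exp (-a) < cosh (cuspedPantsDist a b) := by
  have one_add_exp_lt : 1 + exp (-a) <
      (1 + cosh (a / 2) * cosh (b / 2)) / (sinh (a / 2) * sinh (b / 2)) := by
    calc
      1 + exp (-a) = 1 + exp (-(2 * (a / 2))) := by ring_nf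
      _ ≤ cosh (a / 2) / sinh (a / 2) :=
        one_add_exp_neg_two_mul_le_cosh_div_sinh (half_pos ha)
      _ < _ := cosh_div_sinh_lt_one_add_cosh_mul_cosh_div (half_pos ha) (half_pos hb)
  rwa [cuspedPantsDist, arcosh_eq_real_arcosh, cosh_arcosh (by linarith [exp_pos (-a)])]

theorem stmt_3_general {ι : Type*} {F : Filter ι} {a b : ι → ℝ}
    (ha : ∀ᶠ i in F, 0 < a i) (hb : ∀ᶠ i in F, 0 < b i)
    (hdist : Tendsto (fun i ↦ cuspedPantsDist (a i) (b i)) F (nhds 0)) :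
    Tendsto a F atTop := by
  have cosh_sub_one_tendsto :
      Tendsto (fun i ↦ cosh (cuspedPantsDist (a i) (b i)) - 1) F (nhds 0) := by
    simpa using ((continuous_cosh.tendsto 0).comp hdist).sub_const 1
  have exp_neg_tendsto : Tendsto (fun i ↦ exp (-a i)) F (nhds 0) := by
    refine squeeze_zero' (.of_forall fun i ↦ (exp_pos _).le) ?_ cosh_sub_one_tendsto
    filter_upwards [ha, hb] with i hai hbi
    linarith [one_add_exp_neg_lt_cosh_cuspedPantsDist hai hbi]
  exact tendsto_neg_atBot_iff.1 (tendsto_exp_comp_nhds_zero.1 exp_neg_tendsto)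

/-- if the distances between successive geodesics in a tight flute
surface are summable, then the boundary lengths tend to infinity. -/
theorem stmt_3 (l : ℕ → ℝ) (hl : ∀ i, 0 < l i) (d : ℕ → ℝ)
    (hd : ∀ i, d i =
      _root_.arcosh ((1 + Real.cosh (l i / 2) * Real.cosh (l (i + 1) / 2)) /
        (Real.sinh (l i / 2) * Real.sinh (l (i + 1) / 2))))
    (hsum : Summable d) :
    Tendsto l atTop atTop := by
  have hdist : d = fun i ↦ cuspedPantsDist (l i) (l (i + 1)) := funext hd
  exact stmt_3_general (.of_forall hl) (.of_forall fun i ↦ hl (i + 1))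
    (hdist ▸ hsum.tendsto_atTop_zero)
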